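/- Let A ∈ ℝ^{n×n}, B ∈ ℝ^{n×m} with (A,B) stabilizable and all eigenvalues of A in the closed unit disc. For ε > 0 let P_ε be the unique positive definite solution of the discrete algebraic Riccati equation AᵀP A − P − AᵀP B (I + BᵀP B)^{−1} BᵀP A + εI = 0, and let K_ε := (I + BᵀP_ε B)^{−1} BᵀP_ε A. Then P_ε → 0 and K_ε → 0 as ε → 0⁺; in particular, for every μ > 0 there exists ε* > 0 such that ‖B K_ε‖ ≤ μ for all ε ∈ (0, ε*]. -/

import Mathlib

open Matrix Filter Topology Kronecker
open scoped Classical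

noncomputable section

/-- A complex square matrix is Schur stable if all its eigenvalues lie in the open unit disc. -/
def SchurStableC {ι : Type*} [Fintype ι] [DecidableEq ι] (M : Matrix ι ι ℂ) : Prop :=
  ∀ μ ∈ spectrum ℂ M, ‖μ‖ < 1

/-- A real square matrix is Schur stable if all its (complex) eigenvalues lie in the open
unit disc. -/
def SchurStable {ι : Type*} [Fintype ι] [DecidableEq ι] (M : Matrix ι ι ℝ) : Prop :=
  SchurStableC (M.map Complex.ofReal)

/-- All eigenvalues of a real square matrix lie in the closed unit disc. -/
def EigInClosedUnitDisc {ι : Type*} [Fintype ι] [DecidableEq ι] (M : Matrix ι ι ℝ) : Prop :=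
  ∀ μ ∈ spectrum ℂ (M.map Complex.ofReal), ‖μ‖ ≤ 1

/-- The pair (A,B) is stabilizable. -/
def Stabilizable {n m : ℕ} (A : Matrix (Fin n) (Fin n) ℝ) (B : Matrix (Fin n) (Fin m) ℝ) : Prop :=
  ∃ K : Matrix (Fin m) (Fin n) ℝ, SchurStable (A - B * K)

/-- The pair (C,A) is detectable. -/
def Detectable {n q : ℕ} (C : Matrix (Fin q) (Fin n) ℝ) (A : Matrix (Fin n) (Fin n) ℝ) : Prop :=
  ∃ F : Matrix (Fin n) (Fin q) ℝ, SchurStable (A - F * C)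

/-- `P` is a positive definite solution of the discrete algebraic Riccati equation
`AᵀPA − P − AᵀPB(I + BᵀPB)⁻¹BᵀPA + εI = 0`. -/
def IsDARESol {n m : ℕ} (A : Matrix (Fin n) (Fin n) ℝ) (B : Matrix (Fin n) (Fin m) ℝ)
    (ε : ℝ) (P : Matrix (Fin n) (Fin n) ℝ) : Prop :=
  P.PosDef ∧
    Aᵀ * P * A - P - Aᵀ * P * B * (1 + Bᵀ * P * B)⁻¹ * (Bᵀ * P * A)
      + ε • (1 : Matrix (Fin n) (Fin n) ℝ) = 0

/-- The low-gain feedback `K = (I + BᵀPB)⁻¹BᵀPA`. -/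
def gainK {n m : ℕ} (A : Matrix (Fin n) (Fin n) ℝ) (B : Matrix (Fin n) (Fin m) ℝ)
    (P : Matrix (Fin n) (Fin n) ℝ) : Matrix (Fin m) (Fin n) ℝ :=
  (1 + Bᵀ * P * B)⁻¹ * (Bᵀ * P * A)

/-- `ω_max`: zero if `A` is Schur stable, otherwise the largest `ω ∈ [0,π]` with
`det(e^{iω}I − A) = 0`. -/
def omegaMax {n : ℕ} (A : Matrix (Fin n) (Fin n) ℝ) : ℝ :=
  if SchurStable A then 0
  else sSup {ω : ℝ | ω ∈ Set.Icc 0 Real.pi ∧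
    (Complex.exp (ω * Complex.I) • (1 : Matrix (Fin n) (Fin n) ℂ)
      - A.map Complex.ofReal).det = 0}

/-- In-degree `d_in(i) = Σ_j a_{ij}`. -/
def dIn {N : ℕ} (a : Fin N → Fin N → ℝ) (i : Fin N) : ℝ := ∑ j, a i j

/-- The Laplacian matrix of the weights `a`. -/
def lapL {N : ℕ} (a : Fin N → Fin N → ℝ) : Matrix (Fin N) (Fin N) ℝ :=
  Matrix.of fun i j => if i = j then dIn a i else -a i j

/-- The expanded Laplacian `L̄ = L + diag(ι)`. -/
def lapLbar {N : ℕ} (a : Fin N → Fin N → ℝ) (ι : Fin N → ℝ) : Matrix (Fin N) (Fin N) ℝ :=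
  lapL a + Matrix.diagonal ι

/-- `D̄ = I − (2I + D_in)⁻¹ L̄`. -/
def DbarM {N : ℕ} (a : Fin N → Fin N → ℝ) (ι : Fin N → ℝ) : Matrix (Fin N) (Fin N) ℝ :=
  1 - ((2 : ℝ) • (1 : Matrix (Fin N) (Fin N) ℝ) + Matrix.diagonal (dIn a))⁻¹ * lapLbar a ι

/-!
The solutions `P_ε` stay bounded as `ε → 0⁺`: for a stabilizing gain `L`, completing the square in
the Riccati equation gives `P ≤ FᴴPF + Q` with `F = A - BL` Schur stable, and iterating this
inequality bounds the trace of `P`. By compactness it suffices that the only positive semidefinite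
solution of the Riccati equation with `ε = 0` is `P = 0`.

If `P ≠ 0` were such a solution with gain `K`, the Lyapunov identity
`(A - BK)ᴴP(A - BK) + KᴴK = P` makes `ker P` invariant under `A - BK`, so there are `x` and `z` with
`w := Px ≠ 0` and `P(A - BK)x = zw`. Then `Aᴴw = z⁻¹w`, whence `|z| ≥ 1`, and the Lyapunov identity
`xᴴPx = |z|² xᴴPx + |Kx|²` forces `|z| = 1` and `Kx = 0`. Since `K = BᴴP(A - BK)`, also `Bᴴw = 0`,
so `w` is an eigenvector of `(A - BL)ᴴ` on the unit circle for every `L`, contradicting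
stabilizability.
-/

section Spectrum

theorem tendsto_pow_nhds_zero_of_spectralRadius_lt_one {𝔸 : Type*} [NormedRing 𝔸]
    [NormedAlgebra ℂ 𝔸] [CompleteSpace 𝔸] {a : 𝔸} (ha : spectralRadius ℂ a < 1) :
    Tendsto (fun N : ℕ => a ^ N) atTop (𝓝 0) := by
  obtain ⟨r, har, hr⟩ := ENNReal.lt_iff_exists_nnreal_btwn.mp ha
  have hroot :=
    (spectrum.pow_nnnorm_pow_one_div_tendsto_nhds_spectralRadius a).eventually_lt_const har
  refine squeeze_zero_norm' ?_
    (tendsto_pow_atTop_nhds_zero_of_lt_one r.coe_nonneg (by exact_mod_cast hr))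
  filter_upwards [hroot, eventually_gt_atTop 0] with N hN hN0
  have hpow := ENNReal.rpow_le_rpow hN.le N.cast_nonneg
  rw [← ENNReal.rpow_mul, one_div_mul_cancel (by exact_mod_cast hN0.ne'), ENNReal.rpow_one,
    ENNReal.rpow_natCast] at hpow
  exact_mod_cast hpow

variable {ι : Type*} [Fintype ι] [DecidableEq ι]

theorem mem_spectrum_of_mulVec_eq_smul {𝕜 : Type*} [Field 𝕜] {M : Matrix ι ι 𝕜} {w : ι → 𝕜}
    {ν : 𝕜} (hw : w ≠ 0) (h : M *ᵥ w = ν • w) : ν ∈ spectrum 𝕜 M := by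
  rw [← Matrix.spectrum_toLin']
  exact (Module.End.hasEigenvalue_of_hasEigenvector
    ⟨Module.End.mem_eigenspace_iff.mpr h, hw⟩).mem_spectrum

theorem star_mem_spectrum_of_conjTranspose_mulVec_eq_smul {M : Matrix ι ι ℂ} {w : ι → ℂ} {ν : ℂ}
    (hw : w ≠ 0) (h : Mᴴ *ᵥ w = ν • w) : star ν ∈ spectrum ℂ M := by
  simpa [← Matrix.star_eq_conjTranspose, spectrum.map_star] using
    mem_spectrum_of_mulVec_eq_smul hw h

theorem exists_notMem_sub_smul_mem {𝕜 V : Type*} [Field 𝕜] [IsAlgClosed 𝕜] [AddCommGroup V]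
    [Module 𝕜 V] [FiniteDimensional 𝕜 V] {f : Module.End 𝕜 V} {p : Submodule 𝕜 V}
    (hp : p ≤ p.comap f) (hne : p ≠ ⊤) : ∃ μ : 𝕜, ∃ x ∉ p, f x - μ • x ∈ p := by
  have : Nontrivial (V ⧸ p) := Submodule.Quotient.nontrivial_iff.mpr hne
  obtain ⟨μ, hμ⟩ := Module.End.exists_eigenvalue (p.mapQ p f hp)
  obtain ⟨y, hy⟩ := hμ.exists_hasEigenvector
  obtain ⟨x, rfl⟩ := p.mkQ_surjective y
  refine ⟨μ, x, fun hx => hy.2 ((Submodule.Quotient.mk_eq_zero p).mpr hx), ?_⟩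
  exact (Submodule.Quotient.eq p).mp hy.apply_eq_smul

end Spectrum

section PosSemidef

open scoped MatrixOrder ComplexOrder

variable {𝕜 ι κ : Type*} [RCLike 𝕜]

theorem exists_eq_conjTranspose_mul_self_of_posSemidef [Fintype ι] {P : Matrix ι ι 𝕜}
    (hP : P.PosSemidef) : ∃ C : Matrix ι ι 𝕜, P = Cᴴ * C :=
  CStarAlgebra.nonneg_iff_eq_star_mul_self.mp hP.nonneg

theorem isClosed_setOf_posSemidef [Finite ι] : IsClosed {P : Matrix ι ι 𝕜 | P.PosSemidef} := by
  cases nonempty_fintype ι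
  simp only [Matrix.posSemidef_iff_dotProduct_mulVec, Matrix.IsHermitian, Set.ofPred_and,
    Set.ofPred_forall]
  exact (isClosed_eq (by fun_prop) (by fun_prop)).inter
    (isClosed_iInter fun x => isClosed_le (by fun_prop) (by fun_prop))

theorem posDef_one_add_conjTranspose_mul_mul [Fintype ι] [Finite κ] [DecidableEq κ]
    {P : Matrix ι ι 𝕜} (hP : P.PosSemidef) (B : Matrix ι κ 𝕜) : (1 + Bᴴ * P * B).PosDef := by
  cases nonempty_fintype κ
  exact Matrix.PosDef.one.add_posSemidef (hP.conjTranspose_mul_mul_same B)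

theorem isUnit_det_one_add_transpose_mul_mul [Fintype ι] [Fintype κ] [DecidableEq κ]
    {P : Matrix ι ι ℝ} (hP : P.PosSemidef) (B : Matrix ι κ ℝ) : IsUnit (1 + Bᵀ * P * B).det := by
  rw [← Matrix.isUnit_iff_isUnit_det, ← Matrix.conjTranspose_eq_transpose_of_trivial]
  exact (posDef_one_add_conjTranspose_mul_mul hP B).isUnit

theorem conjTranspose_map_ofReal (M : Matrix ι κ ℝ) :
    (M.map Complex.ofRealHom)ᴴ = Mᵀ.map Complex.ofRealHom := by
  ext
  simp

theorem posSemidef_map_ofReal [Finite ι] {P : Matrix ι ι ℝ} (hP : P.PosSemidef) :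
    (P.map Complex.ofRealHom).PosSemidef := by
  cases nonempty_fintype ι
  obtain ⟨C, rfl⟩ := exists_eq_conjTranspose_mul_self_of_posSemidef hP
  rw [Matrix.map_mul, Matrix.conjTranspose_eq_transpose_of_trivial, ← conjTranspose_map_ofReal]
  exact Matrix.posSemidef_conjTranspose_mul_self _

end PosSemidef

section Frobenius

open scoped Matrix.Norms.Frobenius MatrixOrder ComplexOrder

variable {𝕜 ι κ : Type*} [RCLike 𝕜] [Fintype ι] [Fintype κ]

theorem re_trace_conjTranspose_mul_self (C : Matrix κ ι 𝕜) :
    RCLike.re (Cᴴ * C).trace = ‖C‖ ^ 2 := by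
  rw [Matrix.frobenius_norm_def, ← Real.sqrt_eq_rpow, Real.sq_sqrt (by positivity),
    Finset.sum_comm]
  simp [Matrix.trace, Matrix.mul_apply, RCLike.conj_mul, -map_pow, ← RCLike.ofReal_pow]

theorem norm_le_re_trace_of_posSemidef {P : Matrix ι ι 𝕜} (hP : P.PosSemidef) :
    ‖P‖ ≤ RCLike.re P.trace := by
  obtain ⟨C, rfl⟩ := exists_eq_conjTranspose_mul_self_of_posSemidef hP
  calc ‖Cᴴ * C‖ ≤ ‖Cᴴ‖ * ‖C‖ := Matrix.frobenius_norm_mul _ _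
    _ = RCLike.re (Cᴴ * C).trace := by
      rw [Matrix.frobenius_norm_conjTranspose, re_trace_conjTranspose_mul_self, sq]

theorem re_trace_conjTranspose_mul_mul_le {P : Matrix ι ι 𝕜} (hP : P.PosSemidef)
    (G : Matrix ι κ 𝕜) : RCLike.re (Gᴴ * P * G).trace ≤ ‖G‖ ^ 2 * RCLike.re P.trace := by
  obtain ⟨C, rfl⟩ := exists_eq_conjTranspose_mul_self_of_posSemidef hP
  have hCG : Gᴴ * (Cᴴ * C) * G = (C * G)ᴴ * (C * G) := by
    simp only [Matrix.conjTranspose_mul, Matrix.mul_assoc]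
  rw [hCG, re_trace_conjTranspose_mul_self, re_trace_conjTranspose_mul_self, ← mul_pow, mul_comm]
  gcongr
  exact Matrix.frobenius_norm_mul _ _

theorem re_trace_mono {P Q : Matrix ι ι 𝕜} (h : P ≤ Q) :
    RCLike.re P.trace ≤ RCLike.re Q.trace := by
  have := RCLike.re_le_re (Matrix.le_iff.mp h).trace_nonneg
  simpa using this

theorem isCompact_setOf_posSemidef_re_trace_le (M : ℝ) :
    IsCompact {P : Matrix ι ι 𝕜 | P.PosSemidef ∧ RCLike.re P.trace ≤ M} := by
  have : ProperSpace (Matrix ι ι 𝕜) := FiniteDimensional.proper 𝕜 _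
  refine (isCompact_closedBall (0 : Matrix ι ι 𝕜) M).of_isClosed_subset ?_ ?_
  · exact isClosed_setOf_posSemidef.inter
      (isClosed_le (RCLike.continuous_re.comp continuous_id.matrix_trace) continuous_const)
  · rintro P ⟨hP, hM⟩
    exact mem_closedBall_zero_iff.mpr ((norm_le_re_trace_of_posSemidef hP).trans hM)

theorem le_star_pow_mul_mul_pow_add_sum {R : Type*} [Semiring R] [PartialOrder R] [StarRing R]
    [StarOrderedRing R] {f p q : R} (h : p ≤ star f * p * f + q) (N : ℕ) :
    p ≤ star (f ^ N) * p * f ^ N + ∑ k ∈ Finset.range N, star (f ^ k) * q * f ^ k := by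
  induction N with
  | zero => simp
  | succ N ih =>
    calc p ≤ star (f ^ N) * p * f ^ N + ∑ k ∈ Finset.range N, star (f ^ k) * q * f ^ k := ih
      _ ≤ star (f ^ N) * (star f * p * f + q) * f ^ N
            + ∑ k ∈ Finset.range N, star (f ^ k) * q * f ^ k := by
        gcongr
        exact star_left_conjugate_le_conjugate h _
      _ = _ := by
        rw [Finset.sum_range_succ_comm, pow_succ', star_mul]
        simp only [mul_add, add_mul, mul_assoc, add_assoc]

variable [DecidableEq ι]

theorem exists_re_trace_le_of_le_conjTranspose_mul_mul_add {F : Matrix ι ι 𝕜}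
    (hF : Tendsto (fun N : ℕ => F ^ N) atTop (𝓝 0)) (Q : Matrix ι ι 𝕜) :
    ∃ M : ℝ, ∀ P : Matrix ι ι 𝕜, P.PosSemidef → P ≤ Fᴴ * P * F + Q → RCLike.re P.trace ≤ M := by
  obtain ⟨N, hN⟩ : ∃ N : ℕ, ‖F ^ N‖ ^ 2 < 1 / 2 :=
    ((hF.norm.pow 2).eventually_lt_const (by simp)).exists
  let S := ∑ k ∈ Finset.range N, star (F ^ k) * Q * F ^ k
  refine ⟨2 * RCLike.re S.trace, fun P hP hPQ => ?_⟩
  have hiter : P ≤ (F ^ N)ᴴ * P * F ^ N + S := le_star_pow_mul_mul_pow_add_sum hPQ N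
  have htrace_nonneg : 0 ≤ RCLike.re P.trace :=
    (norm_nonneg P).trans (norm_le_re_trace_of_posSemidef hP)
  have : RCLike.re P.trace ≤ 1 / 2 * RCLike.re P.trace + RCLike.re S.trace :=
    calc RCLike.re P.trace ≤ RCLike.re ((F ^ N)ᴴ * P * F ^ N).trace + RCLike.re S.trace := by
          simpa only [Matrix.trace_add, map_add] using re_trace_mono hiter
      _ ≤ ‖F ^ N‖ ^ 2 * RCLike.re P.trace + RCLike.re S.trace := by
          gcongr
          exact re_trace_conjTranspose_mul_mul_le hP _
      _ ≤ 1 / 2 * RCLike.re P.trace + RCLike.re S.trace := by gcongr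
  linarith

theorem SchurStableC.tendsto_pow {F : Matrix ι ι ℂ} (hF : SchurStableC F) :
    Tendsto (fun N : ℕ => F ^ N) atTop (𝓝 0) := by
  cases isEmpty_or_nonempty ι
  · simpa only [Subsingleton.elim _ (0 : Matrix ι ι ℂ)] using tendsto_const_nhds
  · have : CompleteSpace (Matrix ι ι ℂ) := FiniteDimensional.complete ℂ _
    refine tendsto_pow_nhds_zero_of_spectralRadius_lt_one ?_
    exact spectrum.spectralRadius_lt_of_forall_lt F (r := 1) fun z hz => by exact_mod_cast hF z hz

theorem SchurStable.tendsto_pow {F : Matrix ι ι ℝ} (hF : SchurStable F) :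
    Tendsto (fun N : ℕ => F ^ N) atTop (𝓝 0) := by
  have hmap (N : ℕ) : ‖(F.map Complex.ofReal) ^ N‖ = ‖F ^ N‖ := by
    have h : (F ^ N).map Complex.ofReal = (F.map Complex.ofReal) ^ N :=
      map_pow Complex.ofRealHom.mapMatrix F N
    rw [← h, Matrix.frobenius_norm_map_eq _ _ Complex.norm_real]
  refine tendsto_zero_iff_norm_tendsto_zero.mpr ?_
  simpa only [hmap] using tendsto_zero_iff_norm_tendsto_zero.mp (SchurStableC.tendsto_pow hF)

end Frobenius

section Riccati

variable {ι κ : Type*} [Fintype ι] [Fintype κ]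

open scoped ComplexOrder

theorem dotProduct_lyapunov {𝕜 : Type*} [CommRing 𝕜] [StarRing 𝕜] {P F : Matrix ι ι 𝕜}
    {K : Matrix κ ι 𝕜} (h : Fᴴ * P * F + Kᴴ * K = P) (x : ι → 𝕜) :
    star x ⬝ᵥ P *ᵥ x = star (F *ᵥ x) ⬝ᵥ P *ᵥ (F *ᵥ x) + star (K *ᵥ x) ⬝ᵥ (K *ᵥ x) := by
  conv_lhs => rw [← h]
  simp only [Matrix.add_mulVec, dotProduct_add, Matrix.star_mulVec, Matrix.dotProduct_mulVec,
    Matrix.vecMul_vecMul, Matrix.mul_assoc]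

theorem mulVec_mulVec_eq_zero_of_lyapunov {𝕜 : Type*} [RCLike 𝕜] {P F : Matrix ι ι 𝕜}
    {K : Matrix κ ι 𝕜} (hP : P.PosSemidef) (h : Fᴴ * P * F + Kᴴ * K = P) {x : ι → 𝕜}
    (hx : P *ᵥ x = 0) : P *ᵥ (F *ᵥ x) = 0 := by
  have hsum := dotProduct_lyapunov h x
  rw [hx, dotProduct_zero, eq_comm, add_eq_zero_iff_of_nonneg (hP.dotProduct_mulVec_nonneg _)
    (dotProduct_star_self_nonneg _)] at hsum
  exact (hP.dotProduct_mulVec_zero_iff _).mp hsum.1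

theorem norm_eq_one_and_mulVec_eq_zero_of_lyapunov {𝕜 : Type*} [RCLike 𝕜]
    {F P : Matrix ι ι 𝕜} {K : Matrix κ ι 𝕜} (hP : P.PosSemidef) (h : Fᴴ * P * F + Kᴴ * K = P)
    {x : ι → 𝕜} {z : 𝕜} (hz : 1 ≤ ‖z‖) (hx : P *ᵥ x ≠ 0) (hFx : P *ᵥ (F *ᵥ x) = z • P *ᵥ x) :
    ‖z‖ = 1 ∧ K *ᵥ x = 0 := by
  have hquad : star (F *ᵥ x) ⬝ᵥ P *ᵥ (F *ᵥ x) = (‖z‖ ^ 2 : ℝ) * (star x ⬝ᵥ P *ᵥ x) := by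
    have hcross : star (F *ᵥ x) ⬝ᵥ P *ᵥ x = star z * (star x ⬝ᵥ P *ᵥ x) := by
      have := congrArg (fun v => star v ⬝ᵥ x) hFx
      simpa [Matrix.star_mulVec, hP.isHermitian.eq, ← Matrix.dotProduct_mulVec] using this
    rw [hFx, dotProduct_smul, hcross, smul_eq_mul, ← mul_assoc, ← starRingEnd_apply,
      RCLike.mul_conj]
    simp
  have hpos : 0 < star x ⬝ᵥ P *ᵥ x :=
    (hP.dotProduct_mulVec_nonneg x).lt_of_ne' (mt (hP.dotProduct_mulVec_zero_iff x).mp hx)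
  have hsum := dotProduct_lyapunov h x
  rw [hquad] at hsum
  have hle : star x ⬝ᵥ P *ᵥ x ≤ (‖z‖ ^ 2 : ℝ) * (star x ⬝ᵥ P *ᵥ x) := by
    refine le_mul_of_one_le_left hpos.le ?_
    exact_mod_cast one_le_pow₀ hz
  have hKx : star (K *ᵥ x) ⬝ᵥ (K *ᵥ x) = 0 := by
    refine le_antisymm ?_ (dotProduct_star_self_nonneg _)
    exact (add_le_iff_nonpos_right _).mp (hsum.ge.trans hle)
  rw [hKx, add_zero, eq_comm, mul_eq_right₀ hpos.ne'] at hsum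
  exact ⟨(pow_eq_one_iff_of_nonneg (norm_nonneg z) two_ne_zero).mp (by exact_mod_cast hsum),
    dotProduct_star_self_eq_zero.mp hKx⟩

theorem exists_mulVec_mulVec_eq_smul_of_lyapunov {P F : Matrix ι ι ℂ} {K : Matrix κ ι ℂ}
    (hP : P.PosSemidef) (hP0 : P ≠ 0) (h : Fᴴ * P * F + Kᴴ * K = P) :
    ∃ (z : ℂ) (x : ι → ℂ), P *ᵥ x ≠ 0 ∧ P *ᵥ (F *ᵥ x) = z • P *ᵥ x := by
  have hker : LinearMap.ker P.mulVecLin ≠ ⊤ := fun htop => hP0 <|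
    Matrix.ext_of_mulVec_single fun i => by
      rw [Matrix.zero_mulVec]
      exact LinearMap.congr_fun (LinearMap.ker_eq_top.mp htop) (Pi.single i 1)
  obtain ⟨z, x, hx, hFx⟩ := exists_notMem_sub_smul_mem (f := F.mulVecLin)
    (p := LinearMap.ker P.mulVecLin)
    (fun x hx => mulVec_mulVec_eq_zero_of_lyapunov hP h hx) hker
  refine ⟨z, x, hx, sub_eq_zero.mp ?_⟩
  rw [← Matrix.mulVec_smul, ← Matrix.mulVec_sub]
  exact hFx

theorem ne_zero_and_conjTranspose_mulVec_eq_inv_smul {𝕜 : Type*} [Field 𝕜] [Star 𝕜]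
    {A F P : Matrix ι ι 𝕜} (hR : Aᴴ * P * F = P) {x : ι → 𝕜} {z : 𝕜} (hx : P *ᵥ x ≠ 0)
    (hFx : P *ᵥ (F *ᵥ x) = z • P *ᵥ x) : z ≠ 0 ∧ Aᴴ *ᵥ (P *ᵥ x) = z⁻¹ • P *ᵥ x := by
  have hAx : P *ᵥ x = z • Aᴴ *ᵥ (P *ᵥ x) := by
    rw [← Matrix.mulVec_smul, ← hFx, Matrix.mulVec_mulVec, Matrix.mulVec_mulVec, hR]
  have hz : z ≠ 0 := fun h => hx (by rw [hAx, h, zero_smul])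
  exact ⟨hz, (eq_inv_smul_iff₀ hz).mpr hAx.symm⟩

theorem SchurStableC.norm_lt_one_of_conjTranspose_mulVec [DecidableEq ι] {A : Matrix ι ι ℂ}
    {B : Matrix ι κ ℂ} {L : Matrix κ ι ℂ} (hL : SchurStableC (A - B * L)) {w : ι → ℂ} {ν : ℂ}
    (hw : w ≠ 0) (hA : Aᴴ *ᵥ w = ν • w) (hB : Bᴴ *ᵥ w = 0) : ‖ν‖ < 1 := by
  have hclosed : (A - B * L)ᴴ *ᵥ w = ν • w := by
    rw [Matrix.conjTranspose_sub, Matrix.conjTranspose_mul, Matrix.sub_mulVec,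
      ← Matrix.mulVec_mulVec, hB, Matrix.mulVec_zero, sub_zero, hA]
  simpa using hL _ (star_mem_spectrum_of_conjTranspose_mulVec_eq_smul hw hclosed)

variable [DecidableEq κ]

theorem riccati_complete_square {R : Type*} [Ring R] [StarRing R] {A P : Matrix ι ι R}
    {B : Matrix ι κ R} {K : Matrix κ ι R} (hP : P.IsHermitian)
    (hK : (1 + Bᴴ * P * B) * K = Bᴴ * P * A) (L : Matrix κ ι R) :
    (A - B * L)ᴴ * P * (A - B * L) + Lᴴ * L =
      Aᴴ * P * (A - B * K) + (L - K)ᴴ * (1 + Bᴴ * P * B) * (L - K) := by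
  have hK' : Kᴴ * (1 + Bᴴ * P * B) = Aᴴ * P * B := by
    simpa [Matrix.conjTranspose_mul, hP.eq, Matrix.mul_assoc] using congrArg conjTranspose hK
  have hsquare : (L - K)ᴴ * (1 + Bᴴ * P * B) * (L - K) =
      Lᴴ * (1 + Bᴴ * P * B) * L - Lᴴ * ((1 + Bᴴ * P * B) * K)
        - Kᴴ * (1 + Bᴴ * P * B) * (L - K) := by
    simp only [Matrix.conjTranspose_sub, Matrix.sub_mul, Matrix.mul_sub, Matrix.mul_assoc]
    abel
  rw [hsquare, hK, hK']
  simp only [Matrix.conjTranspose_sub, Matrix.conjTranspose_mul, Matrix.sub_mul, Matrix.mul_sub,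
    Matrix.mul_assoc, Matrix.mul_add, Matrix.add_mul, Matrix.one_mul]
  abel

theorem gain_eq_conjTranspose_mul_mul_closedLoop {R : Type*} [Ring R] [Star R]
    {A P : Matrix ι ι R} {B : Matrix ι κ R} {K : Matrix κ ι R}
    (hK : (1 + Bᴴ * P * B) * K = Bᴴ * P * A) : K = Bᴴ * P * (A - B * K) := by
  rw [Matrix.mul_sub, ← hK, Matrix.add_mul, Matrix.one_mul, ← Matrix.mul_assoc,
    add_sub_cancel_right]

theorem eq_zero_of_riccati [DecidableEq ι] {A P : Matrix ι ι ℂ} {B : Matrix ι κ ℂ}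
    {K L : Matrix κ ι ℂ} (hA : ∀ ν ∈ spectrum ℂ A, ‖ν‖ ≤ 1) (hL : SchurStableC (A - B * L))
    (hP : P.PosSemidef) (hK : (1 + Bᴴ * P * B) * K = Bᴴ * P * A)
    (hR : Aᴴ * P * (A - B * K) = P) : P = 0 := by
  by_contra hP0
  have hlyap : (A - B * K)ᴴ * P * (A - B * K) + Kᴴ * K = P := by
    rw [riccati_complete_square hP.isHermitian hK, sub_self, Matrix.mul_zero, add_zero, hR]
  obtain ⟨z, x, hx, hFx⟩ := exists_mulVec_mulVec_eq_smul_of_lyapunov hP hP0 hlyap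
  obtain ⟨hz, hAx⟩ := ne_zero_and_conjTranspose_mulVec_eq_inv_smul hR hx hFx
  have hz_ge : 1 ≤ ‖z‖ := by
    have := hA _ (star_mem_spectrum_of_conjTranspose_mulVec_eq_smul hx hAx)
    rwa [norm_star, norm_inv, inv_le_one₀ (norm_pos_iff.mpr hz)] at this
  obtain ⟨hz_eq, hKx⟩ := norm_eq_one_and_mulVec_eq_zero_of_lyapunov hP hlyap hz_ge hx hFx
  have hBx : Bᴴ *ᵥ (P *ᵥ x) = 0 := by
    rw [gain_eq_conjTranspose_mul_mul_closedLoop hK, ← Matrix.mulVec_mulVec,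
      ← Matrix.mulVec_mulVec, hFx, Matrix.mulVec_smul, smul_eq_zero] at hKx
    exact hKx.resolve_left hz
  have := hL.norm_lt_one_of_conjTranspose_mulVec hx hAx hBx
  simp [hz_eq] at this

end Riccati

theorem continuousAt_matrix_mul {X R ι κ τ : Type*} [TopologicalSpace X] [TopologicalSpace R]
    [Mul R] [AddCommMonoid R] [ContinuousAdd R] [ContinuousMul R] [Fintype κ]
    {f : X → Matrix ι κ R} {g : X → Matrix κ τ R} {x : X} (hf : ContinuousAt f x)
    (hg : ContinuousAt g x) : ContinuousAt (fun y => f y * g y) x :=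
  (continuous_fst.matrix_mul continuous_snd).continuousAt.comp (hf.prodMk hg)

section LowGain

open scoped ComplexOrder MatrixOrder

variable {n m : ℕ} {A P : Matrix (Fin n) (Fin n) ℝ} {B : Matrix (Fin n) (Fin m) ℝ} {ε : ℝ}

/-- The Riccati map `P ↦ AᵀPA − AᵀPB(I + BᵀPB)⁻¹BᵀPA`, with the gain factored out. In these terms
the Riccati equation reads `riccatiMap A B P + ε • 1 = P`. -/
def riccatiMap (A : Matrix (Fin n) (Fin n) ℝ) (B : Matrix (Fin n) (Fin m) ℝ)
    (P : Matrix (Fin n) (Fin n) ℝ) : Matrix (Fin n) (Fin n) ℝ :=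
  Aᵀ * P * (A - B * gainK A B P)

theorem gainK_zero : gainK A B 0 = 0 := by
  simp [gainK]

theorem mul_gainK (hP : P.PosSemidef) : (1 + Bᵀ * P * B) * gainK A B P = Bᵀ * P * A :=
  Matrix.mul_nonsing_inv_cancel_left _ _ (isUnit_det_one_add_transpose_mul_mul hP B)

theorem IsDARESol.riccatiMap_add (h : IsDARESol A B ε P) : riccatiMap A B P + ε • 1 = P := by
  rw [← sub_eq_zero, ← h.2]
  simp only [riccatiMap, gainK, Matrix.mul_sub, Matrix.mul_assoc]
  abel

theorem IsDARESol.le_conjTranspose_mul_mul_add (h : IsDARESol A B ε P)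
    (L : Matrix (Fin m) (Fin n) ℝ) :
    P ≤ (A - B * L)ᴴ * P * (A - B * L) + (Lᴴ * L + ε • 1) := by
  have hP := h.1.posSemidef
  rw [← add_assoc, riccati_complete_square hP.isHermitian (K := gainK A B P)
    (by simpa only [Matrix.conjTranspose_eq_transpose_of_trivial] using mul_gainK hP)]
  conv_lhs => rw [← h.riccatiMap_add]
  gcongr
  rw [Matrix.conjTranspose_eq_transpose_of_trivial A]
  refine le_add_of_nonneg_right ?_
  exact ((posDef_one_add_conjTranspose_mul_mul hP B).posSemidef.conjTranspose_mul_mul_same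
    _).nonneg

theorem Stabilizable.exists_trace_le (h : Stabilizable A B) :
    ∃ M : ℝ, ∀ ε ≤ 1, ∀ P, IsDARESol A B ε P → P.trace ≤ M := by
  obtain ⟨L, hL⟩ := h
  obtain ⟨M, hM⟩ := exists_re_trace_le_of_le_conjTranspose_mul_mul_add hL.tendsto_pow (Lᴴ * L + 1)
  refine ⟨M, fun ε hε P hP => hM P hP.1.posSemidef ((hP.le_conjTranspose_mul_mul_add L).trans ?_)⟩
  gcongr
  simpa using smul_le_smul_of_nonneg_right hε (zero_le_one (α := Matrix (Fin n) (Fin n) ℝ))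

theorem eq_zero_of_riccatiMap_eq (hstab : Stabilizable A B) (hA : EigInClosedUnitDisc A)
    (hP : P.PosSemidef) (h : riccatiMap A B P = P) : P = 0 := by
  obtain ⟨L, hL⟩ := hstab
  have hPC : P.map Complex.ofRealHom = 0 := by
    refine eq_zero_of_riccati (A := A.map Complex.ofRealHom) (B := B.map Complex.ofRealHom)
      (K := (gainK A B P).map Complex.ofRealHom) (L := L.map Complex.ofRealHom) hA ?_
      (posSemidef_map_ofReal hP) ?_ ?_
    · rwa [← Matrix.map_mul, ← Matrix.map_sub _ (map_sub _)]
    · have := congrArg (·.map Complex.ofRealHom) (mul_gainK (A := A) (B := B) hP)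
      simpa [conjTranspose_map_ofReal, Matrix.map_mul, Matrix.map_add] using this
    · have := congrArg (·.map Complex.ofRealHom) h
      simpa [conjTranspose_map_ofReal, riccatiMap, Matrix.map_mul, Matrix.map_sub] using this
  exact Matrix.map_injective Complex.ofRealHom.injective (by simpa using hPC)

theorem continuousAt_gainK (hP : P.PosSemidef) : ContinuousAt (gainK A B) P := by
  have hinv : ContinuousAt (fun P => (1 + Bᵀ * P * B)⁻¹) P := by
    refine ContinuousAt.comp (g := Inv.inv) (continuousAt_matrix_inv _ ?_) (by fun_prop)
    rw [Ring.inverse_eq_inv']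
    exact continuousAt_inv₀ (isUnit_det_one_add_transpose_mul_mul hP B).ne_zero
  exact continuousAt_matrix_mul hinv (by fun_prop)

theorem continuousAt_riccatiMap (hP : P.PosSemidef) : ContinuousAt (riccatiMap A B) P :=
  continuousAt_matrix_mul (by fun_prop) <| continuousAt_const.sub <|
    continuousAt_matrix_mul continuousAt_const (continuousAt_gainK hP)

theorem tendsto_nhds_zero_of_isDARESol (hstab : Stabilizable A B) (hA : EigInClosedUnitDisc A)
    {α : Type*} {l : Filter α} {ε : α → ℝ} {P : α → Matrix (Fin n) (Fin n) ℝ}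
    (hε : Tendsto ε l (𝓝 0)) (hP : ∀ᶠ t in l, IsDARESol A B (ε t) (P t)) :
    Tendsto P l (𝓝 0) := by
  obtain ⟨M, hM⟩ := hstab.exists_trace_le
  refine (isCompact_setOf_posSemidef_re_trace_le (𝕜 := ℝ) M).tendsto_nhds_of_unique_mapClusterPt
    ?_ ?_
  · filter_upwards [hP, hε.eventually_le_const one_pos] with t ht hεt
    exact ⟨ht.1.posSemidef, hM _ hεt _ ht⟩
  · rintro Q ⟨hQ, -⟩ hcluster
    obtain ⟨U, hUl, hPU⟩ := mapClusterPt_iff_ultrafilter.mp hcluster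
    have hlim : Tendsto (fun t => riccatiMap A B (P t) + ε t • 1) U (𝓝 (riccatiMap A B Q)) := by
      simpa using ((continuousAt_riccatiMap hQ).tendsto.comp hPU).add
        ((hε.mono_left hUl).smul_const (1 : Matrix (Fin n) (Fin n) ℝ))
    refine eq_zero_of_riccatiMap_eq hstab hA hQ (tendsto_nhds_unique (hlim.congr' ?_) hPU)
    filter_upwards [hUl hP] with t ht using ht.riccatiMap_add

end LowGain

section Norm

open scoped Matrix.Norms.L2Operator

theorem continuous_norm_toEuclideanCLM {𝕜 ι : Type*} [RCLike 𝕜] [Fintype ι] [DecidableEq ι] :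
    Continuous fun M : Matrix ι ι 𝕜 => ‖Matrix.toEuclideanCLM (𝕜 := 𝕜) M‖ :=
  continuous_norm

end Norm

/-- the low-gain Riccati solution `P_ε` and gain `K_ε` tend to `0` as
`ε → 0⁺`; in particular, for every `μ > 0` there is `ε* > 0` with `‖B K_ε‖ ≤ μ`
(induced 2-norm) for all `ε ∈ (0, ε*]`. -/
theorem lowgain_riccati_to_zero {n m : ℕ}
    (A : Matrix (Fin n) (Fin n) ℝ) (B : Matrix (Fin n) (Fin m) ℝ)
    (hstab : Stabilizable A B) (hA : EigInClosedUnitDisc A)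
    (P : ℝ → Matrix (Fin n) (Fin n) ℝ)
    (hP : ∀ ε > (0 : ℝ), IsDARESol A B ε (P ε)) :
    Tendsto P (nhdsWithin 0 (Set.Ioi 0)) (nhds 0) ∧
    Tendsto (fun ε => gainK A B (P ε)) (nhdsWithin 0 (Set.Ioi 0)) (nhds 0) ∧
    ∀ μ > (0 : ℝ), ∃ εstar > (0 : ℝ), ∀ ε ∈ Set.Ioc (0 : ℝ) εstar,
      ‖Matrix.toEuclideanCLM (𝕜 := ℝ) (B * gainK A B (P ε))‖ ≤ μ := by
  have hP0 : Tendsto P (𝓝[>] 0) (𝓝 0) :=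
    tendsto_nhds_zero_of_isDARESol hstab hA (tendsto_id.mono_left nhdsWithin_le_nhds)
      (eventually_mem_nhdsWithin.mono hP)
  have hK0 : Tendsto (fun ε => gainK A B (P ε)) (𝓝[>] 0) (𝓝 0) := by
    simpa only [gainK_zero, Function.comp_def] using
      (continuousAt_gainK (A := A) (B := B) Matrix.PosSemidef.zero).tendsto.comp hP0
  refine ⟨hP0, hK0, fun μ hμ => ?_⟩
  have hnorm : Tendsto (fun ε => ‖Matrix.toEuclideanCLM (𝕜 := ℝ) (B * gainK A B (P ε))‖)
      (𝓝[>] 0) (𝓝 0) := by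
    have hcont : Continuous fun K : Matrix (Fin m) (Fin n) ℝ =>
        ‖Matrix.toEuclideanCLM (𝕜 := ℝ) (B * K)‖ :=
      continuous_norm_toEuclideanCLM.comp (continuous_const.matrix_mul continuous_id)
    simpa [Function.comp_def] using (hcont.tendsto 0).comp hK0
  obtain ⟨δ, hδ, hsub⟩ := mem_nhdsGT_iff_exists_Ioc_subset.mp (hnorm.eventually_le_const hμ)
  exact ⟨δ, hδ, hsub⟩
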